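/- Let L be a field of characteristic 0 and let · be a deformed Laurent series product on L((T^{-1})) satisfying T·a = aT + Σ_{i≤0} δ_i(a)T^i for all a ∈ L, where δ_i : L → L (i ≤ 0) are maps. Then the maps δ_i satisfy the Leibniz-type identity (★): for all i ≤ 0 and all a,b ∈ L, δ_i(ab) = a δ_i(b) + δ_i(a) b + Σ_{k≥1} Σ binom(l,k) δ_l(a) δ_{j_1}⋯δ_{j_k}(b), the inner sum being over all tuples (l, j_1, …, j_k) of nonpositive integers with j_1+⋯+j_k − k + l = i (a finite index set). -/

import Mathlib

noncomputable section

open scoped Classical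

/-- The generalized binomial coefficient `binom n k` for an integer `n` and natural `k`;
it equals `n (n-1) ⋯ (n-k+1) / k!` (an integer). -/
def zbinom (n : ℤ) (k : ℕ) : ℤ :=
  if 0 ≤ n then (n.toNat.choose k : ℤ) else (-1) ^ k * (((k : ℤ) - 1 - n).toNat.choose k : ℤ)

/-- The generalized binomial coefficient `a (a-1) ⋯ (a-k+1) / k!` in a field `K`
(of characteristic zero in all uses). -/
def gbinom {K : Type*} [Field K] (a : K) (k : ℕ) : K :=
  (∏ i ∈ Finset.range k, (a - (i : K))) / (k.factorial : K)

/-- Inverse Laurent series over `L`: formal sums `Σ_{i ∈ ℤ} a_i T^i` whose support is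
bounded above. -/
structure InvLaurent (L : Type*) [Zero L] where
  coeff : ℤ → L
  bdd' : ∃ N : ℤ, ∀ i : ℤ, N < i → coeff i = 0

namespace InvLaurent

variable {L : Type*} [Field L]

@[ext] theorem ext {f g : InvLaurent L} (h : ∀ i, f.coeff i = g.coeff i) : f = g := by
  cases f; cases g
  simp only [mk.injEq]
  funext i; exact h i

instance : Zero (InvLaurent L) := ⟨⟨fun _ => 0, ⟨0, fun _ _ => rfl⟩⟩⟩

instance : Add (InvLaurent L) :=
  ⟨fun f g => ⟨fun i => f.coeff i + g.coeff i, by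
    obtain ⟨N, hN⟩ := f.bdd'; obtain ⟨M, hM⟩ := g.bdd'
    exact ⟨max N M, fun i hi => by
      show f.coeff i + g.coeff i = 0
      rw [hN i (lt_of_le_of_lt (le_max_left _ _) hi),
        hM i (lt_of_le_of_lt (le_max_right _ _) hi), add_zero]⟩⟩⟩

instance : Neg (InvLaurent L) :=
  ⟨fun f => ⟨fun i => -f.coeff i, by
    obtain ⟨N, hN⟩ := f.bdd'
    exact ⟨N, fun i hi => by show -f.coeff i = 0; rw [hN i hi, neg_zero]⟩⟩⟩

@[simp] lemma coeff_zero (i : ℤ) : (0 : InvLaurent L).coeff i = 0 := rfl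
@[simp] lemma coeff_add (f g : InvLaurent L) (i : ℤ) :
    (f + g).coeff i = f.coeff i + g.coeff i := rfl
@[simp] lemma coeff_neg (f : InvLaurent L) (i : ℤ) : (-f).coeff i = -f.coeff i := rfl

instance : AddCommGroup (InvLaurent L) where
  add_assoc f g h := by ext i; simp [add_assoc]
  zero_add f := by ext i; simp
  add_zero f := by ext i; simp
  neg_add_cancel f := by ext i; simp
  add_comm f g := by ext i; simp [add_comm]
  nsmul := nsmulRec
  zsmul := zsmulRec

@[simp] lemma coeff_sub (f g : InvLaurent L) (i : ℤ) :
    (f - g).coeff i = f.coeff i - g.coeff i := by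
  rw [sub_eq_add_neg, coeff_add, coeff_neg, sub_eq_add_neg]

/-- The series `a T^n`. -/
def single (n : ℤ) (a : L) : InvLaurent L :=
  ⟨fun i => if i = n then a else 0, ⟨n, fun i hi => if_neg (by omega)⟩⟩

/-- The series `T^n`. -/
def T (L : Type*) [Field L] (n : ℤ) : InvLaurent L := single n 1

/-- Coefficientwise multiplication by a scalar `b ∈ L` on the left. -/
def lsmul (b : L) (f : InvLaurent L) : InvLaurent L :=
  ⟨fun i => b * f.coeff i, by
    obtain ⟨N, hN⟩ := f.bdd'
    exact ⟨N, fun i hi => by show b * f.coeff i = 0; rw [hN i hi, mul_zero]⟩⟩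

/-- The standard degree map, with values in `ℤ ∪ {-∞}`. -/
def deg (f : InvLaurent L) : WithBot ℤ :=
  if f = 0 then ⊥ else ↑(sSup {i : ℤ | f.coeff i ≠ 0})

lemma deg_eq_bot_iff (f : InvLaurent L) : deg f = ⊥ ↔ f = 0 := by
  unfold deg
  split
  · simpa
  · simp_all

lemma support_nonempty {f : InvLaurent L} (hf : f ≠ 0) :
    {i : ℤ | f.coeff i ≠ 0}.Nonempty := by
  by_contra h
  rw [Set.not_nonempty_iff_eq_empty] at h
  apply hf
  ext i
  have : i ∉ ({i : ℤ | f.coeff i ≠ 0}) := by rw [h]; exact Set.notMem_empty i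
  simpa using this

lemma support_bddAbove (f : InvLaurent L) : BddAbove {i : ℤ | f.coeff i ≠ 0} := by
  obtain ⟨N, hN⟩ := f.bdd'
  exact ⟨N, fun i hi => by by_contra h; exact hi (hN i (by omega))⟩

lemma le_deg {f : InvLaurent L} {i : ℤ} (h : f.coeff i ≠ 0) : (i : WithBot ℤ) ≤ deg f := by
  have hf : f ≠ 0 := by
    intro h0; rw [h0] at h; exact h rfl
  rw [deg, if_neg hf]
  exact_mod_cast le_csSup (support_bddAbove f) h

lemma deg_neg (f : InvLaurent L) : deg (-f) = deg f := by
  unfold deg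
  have h0 : -f = 0 ↔ f = 0 := by
    constructor
    · intro h; ext i
      have := congrArg (fun g => InvLaurent.coeff g i) h
      simp only [coeff_neg, coeff_zero, neg_eq_zero] at this
      simpa using this
    · intro h; rw [h]; ext i; simp
  have hs : {i : ℤ | (-f).coeff i ≠ 0} = {i : ℤ | f.coeff i ≠ 0} := by
    ext i; simp
  rw [hs]
  by_cases h : f = 0
  · rw [if_pos (h0.mpr h), if_pos h]
  · rw [if_neg (fun hh => h (h0.mp hh)), if_neg h]

lemma deg_add_le (f g : InvLaurent L) : deg (f + g) ≤ max (deg f) (deg g) := by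
  by_cases h : f + g = 0
  · rw [(deg_eq_bot_iff _).mpr h]; exact bot_le
  · rw [deg, if_neg h]
    have hne := support_nonempty h
    have : sSup {i : ℤ | (f + g).coeff i ≠ 0} ∈ {i : ℤ | (f + g).coeff i ≠ 0} := by
      obtain ⟨N, hN⟩ := support_bddAbove (f + g)
      obtain ⟨m, hm, hmax⟩ := Int.exists_greatest_of_bdd ⟨N, fun i hi => hN hi⟩ hne
      have : sSup {i : ℤ | (f + g).coeff i ≠ 0} = m :=
        le_antisymm (csSup_le hne hmax) (le_csSup (support_bddAbove _) hm)
      rw [this]; exact hm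
    set m := sSup {i : ℤ | (f + g).coeff i ≠ 0} with hm
    have hc : (f + g).coeff m ≠ 0 := this
    rw [coeff_add] at hc
    rcases (by by_contra hh; push_neg at hh; rw [hh.1, hh.2, add_zero] at hc; exact hc rfl :
        f.coeff m ≠ 0 ∨ g.coeff m ≠ 0) with hf | hg
    · exact le_trans (le_deg hf) (le_max_left _ _)
    · exact le_trans (le_deg hg) (le_max_right _ _)

/-- real-exponential of a degree value: `e^d`, with `e^{-∞} = 0`. -/
def edeg : WithBot ℤ → ℝ
  | ⊥ => 0
  | (n : ℤ) => Real.exp n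

lemma edeg_nonneg (d : WithBot ℤ) : 0 ≤ edeg d := by
  cases d with
  | bot => exact le_refl 0
  | coe n => exact le_of_lt (Real.exp_pos _)

lemma edeg_mono {d d' : WithBot ℤ} (h : d ≤ d') : edeg d ≤ edeg d' := by
  cases d with
  | bot => exact edeg_nonneg d'
  | coe n =>
    cases d' with
    | bot => exact absurd h (by simp)
    | coe m =>
      have : n ≤ m := by exact_mod_cast h
      exact Real.exp_le_exp.mpr (by exact_mod_cast this)

lemma edeg_eq_zero_iff (d : WithBot ℤ) : edeg d = 0 ↔ d = ⊥ := by
  cases d with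
  | bot => simp [edeg]
  | coe n =>
    simp only [edeg]
    constructor
    · intro h; exact absurd h (ne_of_gt (Real.exp_pos _))
    · intro h; exact absurd h (by simp)

noncomputable instance : MetricSpace (InvLaurent L) where
  dist f g := edeg (deg (f - g))
  dist_self f := by
    show edeg (deg (f - f)) = 0
    rw [sub_self, (deg_eq_bot_iff (0 : InvLaurent L)).mpr rfl]
    rfl
  dist_comm f g := by
    show edeg (deg (f - g)) = edeg (deg (g - f))
    have h : g - f = -(f - g) := by abel
    rw [h, deg_neg]
  dist_triangle f g h := by
    show edeg (deg (f - h)) ≤ edeg (deg (f - g)) + edeg (deg (g - h))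
    have h1 : f - h = (f - g) + (g - h) := by abel
    have h2 : deg (f - h) ≤ max (deg (f - g)) (deg (g - h)) := by
      rw [h1]; exact deg_add_le _ _
    calc edeg (deg (f - h)) ≤ edeg (max (deg (f - g)) (deg (g - h))) := edeg_mono h2
      _ ≤ edeg (deg (f - g)) + edeg (deg (g - h)) := by
          rcases max_cases (deg (f - g)) (deg (g - h)) with ⟨hm, _⟩ | ⟨hm, _⟩ <;> rw [hm]
          · exact le_add_of_nonneg_right (edeg_nonneg _)
          · exact le_add_of_nonneg_left (edeg_nonneg _)
  eq_of_dist_eq_zero := by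
    intro f g hd
    have hd' : edeg (deg (f - g)) = 0 := hd
    have : deg (f - g) = ⊥ := (edeg_eq_zero_iff _).mp hd'
    have := (deg_eq_bot_iff _).mp this
    exact sub_eq_zero.mp this

end InvLaurent

open InvLaurent

/-- A deformed Laurent series product on `L((T⁻¹))`:
an associative, distributive, jointly continuous multiplication which restricts to left
scalar multiplication by `L`, satisfies `T^i · T^j = T^{i+j}`, and is compatible with the
standard degree map. -/
structure DeformedProduct (L : Type*) [Field L] where
  mul : InvLaurent L → InvLaurent L → InvLaurent L
  mul_assoc : ∀ f g h, mul (mul f g) h = mul f (mul g h)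
  left_distrib : ∀ f g h, mul f (g + h) = mul f g + mul f h
  right_distrib : ∀ f g h, mul (f + g) h = mul f h + mul g h
  continuous_mul : Continuous fun p : InvLaurent L × InvLaurent L => mul p.1 p.2
  lsmul_eq : ∀ (b : L) (f : InvLaurent L), mul (single 0 b) f = lsmul b f
  T_mul_T : ∀ i j : ℤ, mul (T L i) (T L j) = T L (i + j)
  deg_mul : ∀ f g, deg (mul f g) = deg f + deg g

/-- `HasDelta μ δ` says that `T · a = a T + Σ_{i ≤ 0} δ_i(a) T^i` for all `a ∈ L`. -/
def HasDelta {L : Type*} [Field L] (μ : DeformedProduct L) (δ : ℤ → L → L) : Prop :=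
  ∀ (a : L) (i : ℤ), (μ.mul (T L 1) (single 0 a)).coeff i =
    if i = 1 then a else if i ≤ 0 then δ i a else 0

/-- Composition `δ_{j₁} ∘ ⋯ ∘ δ_{j_k}` along a list `[j₁, …, j_k]`. -/
def dcomp {L : Type*} [Field L] (δ : ℤ → L → L) : List ℤ → L → L
  | [], a => a
  | j :: js, a => δ j (dcomp δ js a)

/-- The Leibniz-type identity (★) for the family `δ_i`, `i ≤ 0`. -/
def LeibnizStar {L : Type*} [Field L] (δ : ℤ → L → L) : Prop :=
  ∀ i : ℤ, i ≤ 0 → ∀ a b : L,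
    δ i (a * b) = a * δ i b + δ i a * b +
      ∑ᶠ p : ℤ × List ℤ,
        if p.1 ≤ 0 ∧ p.2 ≠ [] ∧ (∀ j ∈ p.2, j ≤ 0) ∧
            p.2.sum - (p.2.length : ℤ) + p.1 = i
        then zbinom p.1 p.2.length • (δ p.1 a * dcomp δ p.2 b) else 0

end

/-!
For `g` of degree at most `l`, the expansion of `T · a` gives
`[T^(l-n)] (T · g) T⁻¹ = [T^(l-n)] g + ∑_{p+q=n-1} δ_{-p} ([T^(l-q)] g)`.
Hence, with `b` fixed, the coefficients `c l n = [T^(l-n)] (T^l · b)` solve the difference equation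
`c (l+1) n - c l n = ∑_{p+q=n-1} δ_{-p} (c l q)` in `l`, with `c 0 n` the coefficients of `b`. By
Pascal's rule so does `∑ binom(l,k) δ_{j₁} ⋯ δ_{j_k}(b)`, the sum over `j₁, …, j_k ≤ 0` with
`k - (j₁ + ⋯ + j_k) = n`, so the two agree for all `l ∈ ℤ`.
The identity (★) compares the coefficients of `T^i` in `T · (a · b) = (T · a) · b`.
-/

open Finset

lemma zbinom_eq_choose (n : ℤ) (k : ℕ) : zbinom n k = Ring.choose n k := by
  unfold zbinom
  split_ifs with hn
  · lift n to ℕ using hn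
    rw [Int.toNat_natCast, Ring.choose_natCast]
  · have hcast : -n + (k : ℤ) - 1 = (((k : ℤ) - 1 - n).toNat : ℤ) := by lia
    rw [← neg_neg n, Ring.choose_neg, neg_neg, hcast, Ring.choose_natCast]
    simp [Int.negOnePow, Units.smul_def]

lemma zbinom_zero_right (n : ℤ) : zbinom n 0 = 1 := by
  rw [zbinom_eq_choose, Ring.choose_zero_right]

lemma zbinom_zero_succ (k : ℕ) : zbinom 0 (k + 1) = 0 := by
  rw [zbinom_eq_choose, Ring.choose_zero_succ]

lemma zbinom_succ_succ (n : ℤ) (k : ℕ) :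
    zbinom (n + 1) (k + 1) = zbinom n k + zbinom n (k + 1) := by
  simp only [zbinom_eq_choose, Ring.choose_succ_succ]

/-- The lists `[j₁, …, j_k]` of nonpositive integers with `k - (j₁ + ⋯ + j_k) = n`. As `δ_j` lowers
degrees by `1 - j`, these index the compositions `δ_{j₁} ∘ ⋯ ∘ δ_{j_k}` lowering degrees by `n`. -/
def nonposLists : ℕ → Finset (List ℤ)
  | 0 => {[]}
  | n + 1 => (antidiagonal n).attach.biUnion fun p =>
      (nonposLists p.1.2).image (List.cons (-(p.1.1 : ℤ)))
decreasing_by exact Nat.lt_succ_of_le (HasAntidiagonal.antidiagonal.snd_le p.2)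

lemma nonposLists_zero : nonposLists 0 = {[]} := by rw [nonposLists]

lemma nonposLists_succ (n : ℕ) :
    nonposLists (n + 1) = (antidiagonal n).biUnion fun p =>
      (nonposLists p.2).image (List.cons (-(p.1 : ℤ))) := by
  rw [nonposLists]
  exact attach_biUnion (f := fun p : ℕ × ℕ => (nonposLists p.2).image (List.cons (-(p.1 : ℤ))))

lemma nil_mem_nonposLists {n : ℕ} : [] ∈ nonposLists n ↔ n = 0 := by
  cases n <;> simp [nonposLists_zero, nonposLists_succ]

lemma cons_mem_nonposLists_succ {n : ℕ} {j : ℤ} {t : List ℤ} :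
    j :: t ∈ nonposLists (n + 1) ↔ ∃ p q : ℕ, p + q = n ∧ j = -p ∧ t ∈ nonposLists q := by
  simp only [nonposLists_succ, mem_biUnion, mem_image, HasAntidiagonal.mem_antidiagonal,
    List.cons.injEq, Prod.exists]
  grind

lemma mem_nonposLists {n : ℕ} {s : List ℤ} :
    s ∈ nonposLists n ↔ (∀ j ∈ s, j ≤ 0) ∧ (s.length : ℤ) - s.sum = n := by
  induction s generalizing n with
  | nil => simp [nil_mem_nonposLists, eq_comm]
  | cons j t ih =>
    have sum_nonpos (ht : ∀ i ∈ t, i ≤ 0) : t.sum ≤ 0 := by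
      simpa using List.sum_le_card_nsmul t 0 ht
    rw [List.forall_mem_cons, List.length_cons, List.sum_cons]
    cases n with
    | zero =>
      simp only [nonposLists_zero, mem_singleton, reduceCtorEq, false_iff]
      rintro ⟨⟨hj, ht⟩, hsum⟩
      have := sum_nonpos ht
      lia
    | succ n =>
      simp only [cons_mem_nonposLists_succ, ih]
      constructor
      · rintro ⟨p, q, hpq, rfl, ht, hsum⟩
        exact ⟨⟨by lia, ht⟩, by lia⟩
      · rintro ⟨⟨hj, ht⟩, hsum⟩
        have := sum_nonpos ht
        exact ⟨(-j).toNat, ((t.length : ℤ) - t.sum).toNat, by lia, by lia, ht, by lia⟩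

lemma sum_nonposLists_succ {A : Type*} [AddCommMonoid A] (F : List ℤ → A) (n : ℕ) :
    ∑ s ∈ nonposLists (n + 1), F s =
      ∑ p ∈ antidiagonal n, ∑ s ∈ nonposLists p.2, F (-(p.1 : ℤ) :: s) := by
  rw [nonposLists_succ, sum_biUnion]
  · exact sum_congr rfl fun p _ => sum_image List.cons_injective.injOn
  · intro p hp q hq hpq
    rw [Function.onFun, disjoint_left]
    grind [HasAntidiagonal.mem_antidiagonal]

lemma finsum_cons_mem_nonposLists {A : Type*} [AddCommMonoid A] (F : ℤ × List ℤ → A) (n : ℕ) :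
    (∑ᶠ p : ℤ × List ℤ, if p.1 :: p.2 ∈ nonposLists (n + 1) then F p else 0) =
      ∑ p ∈ antidiagonal n, ∑ s ∈ nonposLists p.2, F (-(p.1 : ℤ), s) := by
  have cons_injective : Function.Injective fun p : ℤ × List ℤ => p.1 :: p.2 := by
    rintro ⟨i, s⟩ ⟨j, t⟩ h
    exact Prod.ext (List.cons.inj h).1 (List.cons.inj h).2
  calc
    _ = ∑ p ∈ (nonposLists (n + 1)).preimage _ cons_injective.injOn, F p := by
      rw [finsum_eq_sum_of_support_subset]
      · exact sum_congr rfl fun p hp => if_pos (mem_preimage.1 hp)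
      · exact fun p hp => mem_coe.2 (mem_preimage.2 (ite_ne_right_iff.1 hp).1)
    _ = ∑ s ∈ nonposLists (n + 1), F (s.headI, s.tail) := by
      refine sum_preimage _ _ _ (fun s : List ℤ => F (s.headI, s.tail)) fun s hs hrange => ?_
      cases s with
      | nil => simp [nil_mem_nonposLists] at hs
      | cons j t => exact absurd ⟨(j, t), rfl⟩ hrange
    _ = _ := sum_nonposLists_succ _ n

lemma sum_antidiagonal_sum_nonposLists {A : Type*} [AddCommMonoid A] (F : ℤ × List ℤ → A) (n : ℕ) :
    ∑ p ∈ antidiagonal n, ∑ s ∈ nonposLists p.2, F (-(p.1 : ℤ), s) = F (-n, []) +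
      ∑ᶠ p : ℤ × List ℤ, if p.1 ≤ 0 ∧ p.2 ≠ [] ∧ (∀ j ∈ p.2, j ≤ 0) ∧
        p.2.sum - (p.2.length : ℤ) + p.1 = -n then F p else 0 := by
  have hnil : ∑ p ∈ antidiagonal n, ∑ s ∈ nonposLists p.2,
      (if s = [] then F (-(p.1 : ℤ), s) else 0) = F (-n, []) := by
    simp only [sum_ite_eq', nil_mem_nonposLists]
    rw [sum_eq_single (n, 0), if_pos rfl]
    · grind [HasAntidiagonal.mem_antidiagonal]
    · simp
  have hmem (p : ℤ × List ℤ) : (p.1 ≤ 0 ∧ p.2 ≠ [] ∧ (∀ j ∈ p.2, j ≤ 0) ∧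
      p.2.sum - (p.2.length : ℤ) + p.1 = -n) ↔ p.1 :: p.2 ∈ nonposLists (n + 1) ∧ p.2 ≠ [] := by
    rw [mem_nonposLists, List.forall_mem_cons, List.length_cons, List.sum_cons]
    lia
  simp only [hmem, ite_and]
  rw [finsum_cons_mem_nonposLists fun p => if p.2 ≠ [] then F p else 0, ← hnil]
  simp only [← sum_add_distrib]
  refine sum_congr rfl fun p _ => sum_congr rfl fun s _ => ?_
  rw [ite_not, ite_add_ite, add_zero, zero_add, ite_self]

namespace InvLaurent

variable {L : Type*} [Field L]

lemma coeff_single (n : ℤ) (a : L) (i : ℤ) :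
    (single n a).coeff i = if i = n then a else 0 := rfl

lemma coeff_lsmul (a : L) (f : InvLaurent L) (i : ℤ) :
    (lsmul a f).coeff i = a * f.coeff i := rfl

/-- The map `f ↦ [T^i] f`, bundled as a homomorphism of additive groups. -/
def coeffHom (i : ℤ) : InvLaurent L →+ L where
  toFun f := f.coeff i
  map_zero' := rfl
  map_add' _ _ := rfl

/-- The map `a ↦ a T^n`, bundled as a homomorphism of additive groups. -/
def singleHom (n : ℤ) : L →+ InvLaurent L :=
  AddMonoidHom.mk' (single n) fun a b => by
    ext i
    simp only [coeff_single, coeff_add]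
    split_ifs <;> simp only [add_zero]

lemma deg_le_iff {f : InvLaurent L} {d : ℤ} : deg f ≤ d ↔ ∀ i, d < i → f.coeff i = 0 := by
  refine ⟨fun hf i hi => ?_, fun hf => ?_⟩
  · by_contra hne
    exact absurd (WithBot.coe_le_coe.1 ((le_deg hne).trans hf)) (not_le.2 hi)
  · by_cases h0 : f = 0
    · exact ((deg_eq_bot_iff f).2 h0).trans_le bot_le
    · rw [deg, if_neg h0, WithBot.coe_le_coe]
      exact csSup_le (support_nonempty h0) fun i hi => not_lt.1 fun hdi => hi (hf i hdi)

lemma exists_deg_le (f : InvLaurent L) : ∃ d : ℤ, deg f ≤ d :=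
  f.bdd'.imp fun _ => deg_le_iff.2

lemma deg_single_le (n : ℤ) (a : L) : deg (single n a) ≤ n :=
  deg_le_iff.2 fun _ hi => if_neg hi.ne'

lemma deg_T_le (n : ℤ) : deg (T L n) ≤ n := deg_single_le n 1

lemma map_eq_sum_single {A : Type*} [AddCommGroup A] (φ : InvLaurent L →+ A) {f : InvLaurent L}
    {d : ℤ} (hf : deg f ≤ d) (n : ℕ) (hφ : ∀ t, deg t ≤ (d - n - 1 : ℤ) → φ t = 0) :
    φ f = ∑ p ∈ antidiagonal n, φ (single (d - p.1) (f.coeff (d - p.1))) := by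
  rw [← sub_eq_zero, ← map_sum, ← map_sub]
  refine hφ _ (deg_le_iff.2 fun i hi => ?_)
  rw [coeff_sub, sub_eq_zero]
  change _ = coeffHom i _
  rw [map_sum]
  change _ = ∑ p ∈ antidiagonal n, (single (d - p.1) (f.coeff (d - p.1))).coeff i
  simp only [coeff_single]
  by_cases hid : d < i
  · rw [deg_le_iff.1 hf i hid, sum_eq_zero fun p _ => if_neg (by lia)]
  · obtain ⟨k, rfl⟩ : ∃ k : ℕ, i = d - k := ⟨(d - i).toNat, by lia⟩
    rw [sum_eq_single (k, n - k), if_pos rfl]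
    · grind [HasAntidiagonal.mem_antidiagonal]
    · grind [HasAntidiagonal.mem_antidiagonal]

end InvLaurent

open InvLaurent

namespace DeformedProduct

variable {L : Type*} [Field L] (μ : DeformedProduct L)

/-- The product of `μ`, bundled as a biadditive map. -/
def mulHom : InvLaurent L →+ InvLaurent L →+ InvLaurent L :=
  AddMonoidHom.mk' (fun f => AddMonoidHom.mk' (μ.mul f) (μ.left_distrib f)) fun f g =>
    AddMonoidHom.ext (μ.right_distrib f g)

lemma T_zero_mul (f : InvLaurent L) : μ.mul (T L 0) f = f := by
  ext i
  rw [T, μ.lsmul_eq, coeff_lsmul, one_mul]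

lemma single_zero_mul_T (n : ℤ) (a : L) : μ.mul (single 0 a) (T L n) = single n a := by
  ext i
  rw [μ.lsmul_eq, coeff_lsmul, T, coeff_single, coeff_single, mul_ite, mul_one, mul_zero]

lemma single_zero_mul_single_zero (a b : L) :
    μ.mul (single 0 a) (single 0 b) = single 0 (a * b) := by
  ext i
  rw [μ.lsmul_eq, coeff_lsmul, coeff_single, coeff_single, mul_ite, mul_zero]

variable {μ}

lemma deg_mul_le {f g : InvLaurent L} {d e : ℤ} (hf : deg f ≤ d) (hg : deg g ≤ e) :
    deg (μ.mul f g) ≤ (d + e : ℤ) := by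
  rw [μ.deg_mul, WithBot.coe_add]
  exact add_le_add hf hg

variable (μ)

lemma deg_T_mul_single_le (n : ℤ) (a : L) : deg (μ.mul (T L n) (single 0 a)) ≤ n := by
  simpa only [add_zero] using deg_mul_le (deg_T_le n) (deg_single_le 0 a)

lemma coeff_mul_eq_sum_left {f g : InvLaurent L} {d e : ℤ} (hf : deg f ≤ d) (hg : deg g ≤ e)
    (n : ℕ) :
    (μ.mul f g).coeff (d + e - n) =
      ∑ p ∈ antidiagonal n, f.coeff (d - p.1) * (μ.mul (T L (d - p.1)) g).coeff (d + e - n) := by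
  refine (map_eq_sum_single ((coeffHom (d + e - n)).comp (μ.mulHom.flip g)) hf n
    fun t ht => deg_le_iff.1 (deg_mul_le ht hg) _ (by lia)).trans ?_
  refine sum_congr rfl fun p _ => ?_
  change (μ.mul (single _ _) g).coeff _ = _
  rw [← single_zero_mul_T μ, μ.mul_assoc, μ.lsmul_eq, coeff_lsmul]

lemma coeff_mul_T (f : InvLaurent L) (n i : ℤ) :
    (μ.mul f (T L n)).coeff i = f.coeff (i - n) := by
  obtain ⟨d, hf⟩ := exists_deg_le f
  obtain hi | ⟨m, rfl⟩ : d + n < i ∨ ∃ m : ℕ, i = d + n - m :=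
    (lt_or_ge (d + n) i).imp_right fun hi => ⟨(d + n - i).toNat, by lia⟩
  · rw [deg_le_iff.1 (deg_mul_le hf (deg_T_le n)) i hi, deg_le_iff.1 hf _ (by lia)]
  · rw [coeff_mul_eq_sum_left μ hf (deg_T_le n), sum_eq_single (m, 0)]
    · rw [μ.T_mul_T, T, coeff_single, if_pos (by lia), mul_one]
      congr 1
      lia
    · intro p hp hne
      rw [μ.T_mul_T, T, coeff_single, if_neg, mul_zero]
      grind [HasAntidiagonal.mem_antidiagonal]
    · simp

lemma coeff_mul_eq_sum_right {f g : InvLaurent L} {d e : ℤ} (hf : deg f ≤ d) (hg : deg g ≤ e)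
    (n : ℕ) :
    (μ.mul f g).coeff (d + e - n) =
      ∑ p ∈ antidiagonal n, (μ.mul f (single 0 (g.coeff (e - p.2)))).coeff (d - p.1) := by
  refine (map_eq_sum_single ((coeffHom (d + e - n)).comp (μ.mulHom f)) hg n
    fun t ht => deg_le_iff.1 (deg_mul_le hf ht) _ (by lia)).trans ?_
  rw [← Nat.sum_antidiagonal_swap]
  refine sum_congr rfl fun p hp => ?_
  change (μ.mul f (single (e - p.2) (g.coeff (e - p.2)))).coeff _ = _
  rw [← single_zero_mul_T μ, ← μ.mul_assoc, coeff_mul_T]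
  congr 1
  rw [HasAntidiagonal.mem_antidiagonal] at hp
  lia

end DeformedProduct

/-- The sum `∑ binom(l,k) δ_{j₁} ⋯ δ_{j_k}(b)` over the lists `[j₁, …, j_k]` in `nonposLists n`; it
is the closed form of the coefficient of `T^(l-n)` in `T^l · b`. -/
def binomialDcompSum {L : Type*} [Field L] (δ : ℤ → L → L) (b : L) (l : ℤ) (n : ℕ) : L :=
  ∑ s ∈ nonposLists n, zbinom l s.length • dcomp δ s b

section binomialDcompSum

variable {L : Type*} [Field L] (δ : ℤ → L → L) (b : L)

lemma binomialDcompSum_zero_right (l : ℤ) : binomialDcompSum δ b l 0 = b := by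
  rw [binomialDcompSum, nonposLists_zero, sum_singleton, List.length_nil, zbinom_zero_right,
    one_smul, dcomp]

lemma binomialDcompSum_zero_succ (n : ℕ) : binomialDcompSum δ b 0 (n + 1) = 0 := by
  rw [binomialDcompSum, sum_nonposLists_succ]
  simp only [List.length_cons, zbinom_zero_succ, zero_smul, sum_const_zero]

end binomialDcompSum

namespace HasDelta

variable {L : Type*} [Field L] {μ : DeformedProduct L} {δ : ℤ → L → L}

lemma coeff_T_one_mul_single_one (hδ : HasDelta μ δ) (a : L) :
    (μ.mul (T L 1) (single 0 a)).coeff 1 = a := by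
  rw [hδ, if_pos rfl]

lemma coeff_T_one_mul_single_neg (hδ : HasDelta μ δ) (a : L) (n : ℕ) :
    (μ.mul (T L 1) (single 0 a)).coeff (-n) = δ (-n) a := by
  rw [hδ, if_neg (by lia), if_pos (by lia)]

lemma exists_addMonoidHom (hδ : HasDelta μ δ) (n : ℕ) : ∃ φ : L →+ L, δ (-n) = φ :=
  ⟨(coeffHom (-n)).comp ((μ.mulHom (T L 1)).comp (singleHom 0)),
    funext fun a => (hδ.coeff_T_one_mul_single_neg a n).symm⟩

lemma coeff_T_one_mul_succ (hδ : HasDelta μ δ) {g : InvLaurent L} {l : ℤ} (hg : deg g ≤ l) (n : ℕ) :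
    (μ.mul (T L 1) g).coeff (1 + l - (n + 1 : ℕ)) = g.coeff (l - (n + 1 : ℕ)) +
      ∑ p ∈ antidiagonal n, δ (-p.1) (g.coeff (l - p.2)) := by
  rw [μ.coeff_mul_eq_sum_right (d := 1) (deg_T_le 1) hg, Nat.sum_antidiagonal_succ]
  congr 1
  · simpa using hδ.coeff_T_one_mul_single_one _
  · refine sum_congr rfl fun p _ => ?_
    rw [← hδ.coeff_T_one_mul_single_neg]
    congr 1
    push_cast
    ring

lemma coeff_T_one_mul_top (hδ : HasDelta μ δ) {g : InvLaurent L} {l : ℤ} (hg : deg g ≤ l) :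
    (μ.mul (T L 1) g).coeff (1 + l) = g.coeff l := by
  simpa [hδ.coeff_T_one_mul_single_one] using
    μ.coeff_mul_eq_sum_right (d := 1) (deg_T_le 1) hg 0

lemma binomialDcompSum_add_one_succ (hδ : HasDelta μ δ) (b : L) (l : ℤ) (n : ℕ) :
    binomialDcompSum δ b (l + 1) (n + 1) = binomialDcompSum δ b l (n + 1) +
      ∑ p ∈ antidiagonal n, δ (-p.1) (binomialDcompSum δ b l p.2) := by
  have delta_sum (p : ℕ × ℕ) : δ (-p.1) (binomialDcompSum δ b l p.2) =
      ∑ s ∈ nonposLists p.2, zbinom l s.length • dcomp δ (-(p.1 : ℤ) :: s) b := by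
    obtain ⟨φ, hφ⟩ := hδ.exists_addMonoidHom p.1
    simp only [binomialDcompSum, dcomp, hφ, map_sum, map_zsmul]
  simp only [delta_sum]
  rw [binomialDcompSum, binomialDcompSum]
  simp only [sum_nonposLists_succ, List.length_cons, zbinom_succ_succ, add_smul, sum_add_distrib]
  exact add_comm _ _

lemma coeff_T_add_one_mul_single (hδ : HasDelta μ δ) (b : L) (l : ℤ) :
    (μ.mul (T L (l + 1)) (single 0 b)).coeff (l + 1) = (μ.mul (T L l) (single 0 b)).coeff l := by
  rw [add_comm, ← μ.T_mul_T, μ.mul_assoc, hδ.coeff_T_one_mul_top (μ.deg_T_mul_single_le l b)]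

lemma coeff_T_add_one_mul_single_succ (hδ : HasDelta μ δ) (b : L) (l : ℤ) (n : ℕ) :
    (μ.mul (T L (l + 1)) (single 0 b)).coeff (l + 1 - (n + 1 : ℕ)) =
      (μ.mul (T L l) (single 0 b)).coeff (l - (n + 1 : ℕ)) +
        ∑ p ∈ antidiagonal n, δ (-p.1) ((μ.mul (T L l) (single 0 b)).coeff (l - p.2)) := by
  rw [add_comm l, ← μ.T_mul_T, μ.mul_assoc, hδ.coeff_T_one_mul_succ (μ.deg_T_mul_single_le l b)]

theorem coeff_T_mul_single (hδ : HasDelta μ δ) (b : L) (l : ℤ) (n : ℕ) :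
    (μ.mul (T L l) (single 0 b)).coeff (l - n) = binomialDcompSum δ b l n := by
  induction n using Nat.strong_induction_on generalizing l with | _ n ih =>
  have hzero : (μ.mul (T L 0) (single 0 b)).coeff (0 - n) = binomialDcompSum δ b 0 n := by
    rw [μ.T_zero_mul, coeff_single]
    cases n with
    | zero => rw [if_pos (by lia), binomialDcompSum_zero_right]
    | succ n => rw [if_neg (by lia), binomialDcompSum_zero_succ]
  have hstep (l : ℤ) : (μ.mul (T L (l + 1)) (single 0 b)).coeff (l + 1 - n) -
      (μ.mul (T L l) (single 0 b)).coeff (l - n) =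
        binomialDcompSum δ b (l + 1) n - binomialDcompSum δ b l n := by
    cases n with
    | zero =>
      simp only [Nat.cast_zero, sub_zero, hδ.coeff_T_add_one_mul_single,
        binomialDcompSum_zero_right, sub_self]
    | succ n =>
      rw [hδ.binomialDcompSum_add_one_succ, hδ.coeff_T_add_one_mul_single_succ,
        add_sub_cancel_left, add_sub_cancel_left]
      refine sum_congr rfl fun p hp => ?_
      rw [ih p.2 (Nat.lt_succ_of_le (HasAntidiagonal.antidiagonal.snd_le hp))]
  induction l using Int.induction_on with
  | zero => exact hzero
  | succ l hl => linear_combination hstep l + hl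
  | pred l hl =>
    have := hstep (-l - 1)
    rw [sub_add_cancel] at this
    linear_combination hl - this

theorem delta_mul (hδ : HasDelta μ δ) (a b : L) (n : ℕ) :
    δ (-n) (a * b) = a * δ (-n) b +
      ∑ p ∈ antidiagonal n, δ (-p.1) a * binomialDcompSum δ b (-p.1) p.2 := by
  calc
    δ (-n) (a * b) = (μ.mul (μ.mul (T L 1) (single 0 a)) (single 0 b)).coeff (-n) := by
      rw [μ.mul_assoc, μ.single_zero_mul_single_zero, hδ.coeff_T_one_mul_single_neg]
    _ = ∑ p ∈ antidiagonal (n + 1), (μ.mul (T L 1) (single 0 a)).coeff (1 - p.1) *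
          (μ.mul (T L (1 - p.1)) (single 0 b)).coeff (-n) := by
      have hn : (-n : ℤ) = 1 + 0 - (n + 1 : ℕ) := by lia
      rw [hn, μ.coeff_mul_eq_sum_left (μ.deg_T_mul_single_le 1 a) (deg_single_le 0 b)]
    _ = _ := by
      rw [Nat.sum_antidiagonal_succ]
      congr 1
      · simp only [Nat.cast_zero, sub_zero, hδ.coeff_T_one_mul_single_one,
          hδ.coeff_T_one_mul_single_neg]
      · refine sum_congr rfl fun p hp => ?_
        have hsub : (1 - (p.1 + 1 : ℕ) : ℤ) = -p.1 := by lia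
        have hn : (-n : ℤ) = -p.1 - p.2 := by
          rw [← HasAntidiagonal.mem_antidiagonal.1 hp]
          lia
        rw [hsub, hn, hδ.coeff_T_one_mul_single_neg, hδ.coeff_T_mul_single]

end HasDelta

theorem deformedProduct_leibnizStar_general (L : Type*) [Field L] (μ : DeformedProduct L)
    (δ : ℤ → L → L) (hδ : HasDelta μ δ) : LeibnizStar δ := by
  intro i hi a b
  obtain ⟨n, rfl⟩ : ∃ n : ℕ, i = -n := ⟨i.natAbs, by lia⟩
  rw [hδ.delta_mul, add_assoc]
  simp only [binomialDcompSum, mul_sum, mul_smul_comm]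
  rw [sum_antidiagonal_sum_nonposLists fun p => zbinom p.1 p.2.length • (δ p.1 a * dcomp δ p.2 b),
    List.length_nil, zbinom_zero_right, one_smul, dcomp]

open InvLaurent in
/-- if `L` has characteristic `0` and a deformed Laurent series product on
`L((T⁻¹))` satisfies `T·a = aT + Σ_{i≤0} δ_i(a)T^i`, then the maps `δ_i` satisfy the
Leibniz-type identity (★). -/
theorem deformedProduct_leibnizStar (L : Type*) [Field L] [CharZero L]
    (μ : DeformedProduct L) (δ : ℤ → L → L) (hδ : HasDelta μ δ) :
    LeibnizStar δ :=
  deformedProduct_leibnizStar_general L μ δ hδ
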